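/- arXiv:1312.2543 — 4 statements merged into one kernel-verified Lean document; each statement's English description precedes it below -/
import Mathlib

section
/- Let p be a prime, M an abelian group, and σ : M → M an automorphism with σ^p = id. Write P(σ) = 1 + σ + σ² + ⋯ + σ^{p−1}. Then p·M ⊆ ker(σ − 1) + ker(P(σ)); in particular the quotient M' = M/(ker(σ−1) + ker(P(σ))) is annihilated by p. If moreover M is torsion-free as an abelian group, then ker(σ − 1) ∩ ker(P(σ)) = 0, so the sum ker(σ−1) + ker(P(σ)) is direct. -/
/-!
Write `N = 1 + f + ⋯ + f ^ (n - 1)`. On the fixed points of `f` the endomorphism `N` is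
multiplication by `n`, and if `f ^ n = 1` then every `N m` is a fixed point. Hence
`n • m = N m + (n • m - N m)` splits `n • m` into a fixed point and an element of `ker N`, while an
element fixed by `f` and killed by `N` is killed by `n`.
-/

open Finset Function LinearMap

section Semiring

variable {R M : Type*} [Semiring R] [AddCommMonoid M] [Module R M]

theorem geom_sum_apply_of_isFixedPt {f : Module.End R M} {x : M} (hx : IsFixedPt f x) (n : ℕ) :
    (∑ i ∈ range n, f ^ i) x = n • x := by
  have pow_apply_eq (i : ℕ) : (f ^ i) x = x := by
    rw [Module.End.pow_apply]
    exact hx.iterate i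
  simp only [LinearMap.sum_apply, pow_apply_eq, sum_const, card_range]

end Semiring

section Ring

variable {R M : Type*} [Ring R] [AddCommGroup M] [Module R M] {f : Module.End R M} {n : ℕ}

theorem mem_ker_sub_one_iff_isFixedPt {x : M} : x ∈ ker (f - 1) ↔ IsFixedPt f x := by
  rw [mem_ker, LinearMap.sub_apply, Module.End.one_apply, sub_eq_zero, IsFixedPt]

theorem geom_sum_apply_mem_ker_sub_one (hf : f ^ n = 1) (m : M) :
    (∑ i ∈ range n, f ^ i) m ∈ ker (f - 1) := by
  rw [mem_ker, ← Module.End.mul_apply, mul_geom_sum, hf, sub_self, LinearMap.zero_apply]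

theorem nsmul_sub_geom_sum_apply_mem_ker_geom_sum (hf : f ^ n = 1) (m : M) :
    n • m - (∑ i ∈ range n, f ^ i) m ∈ ker (∑ i ∈ range n, f ^ i) := by
  have isFixedPt_geom_sum : IsFixedPt f ((∑ i ∈ range n, f ^ i) m) :=
    mem_ker_sub_one_iff_isFixedPt.1 (geom_sum_apply_mem_ker_sub_one hf m)
  rw [mem_ker, map_sub, map_nsmul, geom_sum_apply_of_isFixedPt isFixedPt_geom_sum, sub_self]

theorem nsmul_mem_ker_sub_one_sup_ker_geom_sum (hf : f ^ n = 1) (m : M) :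
    n • m ∈ ker (f - 1) ⊔ ker (∑ i ∈ range n, f ^ i) :=
  Submodule.mem_sup.2 ⟨_, geom_sum_apply_mem_ker_sub_one hf m, _,
    nsmul_sub_geom_sum_apply_mem_ker_geom_sum hf m, add_sub_cancel _ _⟩

theorem disjoint_ker_sub_one_ker_geom_sum (hn : IsSMulRegular M n) :
    Disjoint (ker (f - 1)) (ker (∑ i ∈ range n, f ^ i)) := by
  refine Submodule.disjoint_def.2 fun x hx_fixed hx_ker ↦ hn.right_eq_zero_of_smul ?_
  rw [← geom_sum_apply_of_isFixedPt (mem_ker_sub_one_iff_isFixedPt.1 hx_fixed), mem_ker.1 hx_ker]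

theorem nsmul_quotient_eq_zero {S : Submodule R M} (hS : ∀ m : M, n • m ∈ S) (x : M ⧸ S) :
    n • x = 0 := by
  obtain ⟨m, rfl⟩ := S.mkQ_surjective x
  rw [← map_nsmul, Submodule.mkQ_apply, Submodule.Quotient.mk_eq_zero]
  exact hS m

theorem stmt_0_general (hf : f ^ n = 1) :
    (∀ m : M, n • m ∈ ker (f - 1) ⊔ ker (∑ i ∈ range n, f ^ i)) ∧
    (∀ x : M ⧸ (ker (f - 1) ⊔ ker (∑ i ∈ range n, f ^ i)), n • x = 0) ∧
    (IsSMulRegular M n → Disjoint (ker (f - 1)) (ker (∑ i ∈ range n, f ^ i))) :=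
  ⟨nsmul_mem_ker_sub_one_sup_ker_geom_sum hf,
    nsmul_quotient_eq_zero (nsmul_mem_ker_sub_one_sup_ker_geom_sum hf),
    disjoint_ker_sub_one_ker_geom_sum⟩

end Ring

/-- Let p be a prime, M an abelian group, and σ : M → M an automorphism with
σ^p = id.  Write P(σ) = 1 + σ + ⋯ + σ^{p−1}.  Then p·M ⊆ ker(σ − 1) + ker(P(σ)); in
particular M' = M/(ker(σ−1) + ker(P(σ))) is annihilated by p.  If moreover M is
torsion-free, then ker(σ − 1) ∩ ker(P(σ)) = 0. -/
theorem stmt_0 (p : ℕ) (hp : p.Prime) (M : Type*) [AddCommGroup M]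
    (σ : M ≃ₗ[ℤ] M) (hσ : (σ.toLinearMap) ^ p = 1) :
    (∀ m : M, (p : ℤ) • m ∈
      LinearMap.ker (σ.toLinearMap - 1) ⊔
        LinearMap.ker (∑ i ∈ Finset.range p, σ.toLinearMap ^ i)) ∧
    (∀ x : M ⧸ (LinearMap.ker (σ.toLinearMap - 1) ⊔
        LinearMap.ker (∑ i ∈ Finset.range p, σ.toLinearMap ^ i)), (p : ℤ) • x = 0) ∧
    (NoZeroSMulDivisors ℤ M →
      LinearMap.ker (σ.toLinearMap - 1) ⊓
        LinearMap.ker (∑ i ∈ Finset.range p, σ.toLinearMap ^ i) = ⊥) := by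
  obtain ⟨mem_sup, quotient_eq_zero, disjoint⟩ := stmt_0_general hσ
  simp only [Nat.cast_smul_eq_nsmul]
  refine ⟨mem_sup, quotient_eq_zero, fun _ ↦ (disjoint ?_).eq_bot⟩
  have : IsAddTorsionFree M := .of_isTorsionFree ℤ M
  exact nsmul_right_injective hp.ne_zero
end

section
/- Let p be a prime and let M be a free module of finite rank r over the integral group ring ℤ[ℤ/pℤ], with σ denoting the action of a fixed generator of ℤ/pℤ. Then the quotient M/(ker(σ − 1) + ker(P(σ))) is a finite group of cardinality p^r, where P(σ) = 1 + σ + ⋯ + σ^{p−1}. -/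
/-!
Let `N` be the sum of the elements of a finite cyclic group `G` of order `n`, and let `ε` be the
augmentation of `R[G]`. Then `P(σ)` acts as `N`, and `N x = ε(x) N`, so `ker P(σ)` consists of the
vectors whose coordinates all have augmentation `0`; the vectors fixed by `σ` are those whose
coordinates are multiples `c N`, and `ε(c N) = c n`. Hence `ker (σ - 1) + ker P(σ)` is the kernel of
the coordinatewise augmentation modulo `n`, which maps `M` onto a direct sum of copies of `R / n`.
-/

open MonoidAlgebra

section GroupRing

variable (R G : Type*) [CommRing R] [Group G]

/-- The augmentation `∑ c_g g ↦ ∑ c_g` of the group ring `R[G]`, as an `R`-algebra homomorphism. -/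
noncomputable def augmentation : R[G] →ₐ[R] R :=
  MonoidAlgebra.lift R R G 1

/-- The norm element `∑ g` of the group ring of a finite group. -/
noncomputable def normElement [Fintype G] : R[G] :=
  ∑ g : G, of R G g

/-- The augmentation of `R[G]` reduced modulo the order of `G`. -/
noncomputable def augmentationModCard : R[G] →ₗ[R] R ⧸ Ideal.span {(Nat.card G : R)} :=
  (Ideal.Quotient.mkₐ R _).toLinearMap ∘ₗ (augmentation R G).toLinearMap

variable {R G}

@[simp]
lemma augmentation_of (g : G) : augmentation R G (of R G g) = 1 := by
  simp [augmentation]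

lemma augmentationModCard_eq_zero_iff (x : R[G]) :
    augmentationModCard R G x = 0 ↔ (Nat.card G : R) ∣ augmentation R G x := by
  simp [augmentationModCard, Ideal.Quotient.eq_zero_iff_mem, Ideal.mem_span_singleton]

lemma augmentationModCard_surjective : Function.Surjective (augmentationModCard R G) := by
  intro y
  obtain ⟨c, rfl⟩ := Ideal.Quotient.mk_surjective y
  exact ⟨algebraMap R _ c, congrArg _ ((augmentation R G).commutes c)⟩

variable [Fintype G]

@[simp]
lemma augmentation_normElement : augmentation R G (normElement R G) = Nat.card G := by
  simp only [normElement, map_sum, augmentation_of, Finset.sum_const, Finset.card_univ,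
    nsmul_eq_mul, mul_one, Nat.card_eq_fintype_card]

@[simp]
lemma coeff_normElement (g : G) : (normElement R G).coeff g = 1 := by
  classical
  simp [normElement, coeff_sum, Finsupp.single_apply]

lemma of_mul_normElement (g : G) : of R G g * normElement R G = normElement R G := by
  simp only [normElement, Finset.mul_sum, ← map_mul]
  exact Equiv.sum_comp (Equiv.mulLeft g) (of R G)

lemma normElement_mul_of (g : G) : normElement R G * of R G g = normElement R G := by
  simp only [normElement, Finset.sum_mul, ← map_mul]
  exact Equiv.sum_comp (Equiv.mulRight g) (of R G)

lemma normElement_mul (x : R[G]) :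
    normElement R G * x = augmentation R G x • normElement R G := by
  induction x using MonoidAlgebra.induction_on with
  | of g => rw [normElement_mul_of, augmentation_of, one_smul]
  | add x y hx hy => rw [mul_add, hx, hy, map_add, add_smul]
  | smul c x hx => rw [mul_smul_comm, hx, map_smul, smul_eq_mul, mul_smul]

lemma normElement_mul_eq_zero_iff (x : R[G]) :
    normElement R G * x = 0 ↔ augmentation R G x = 0 := by
  rw [normElement_mul]
  refine ⟨fun h => ?_, fun h => by rw [h, zero_smul]⟩
  simpa using congrArg (fun y => y.coeff 1) h

lemma exists_normElement_mul_sub_smul_normElement_eq_zero {x : R[G]}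
    (hx : (Nat.card G : R) ∣ augmentation R G x) :
    ∃ c : R, normElement R G * (x - c • normElement R G) = 0 := by
  obtain ⟨c, hc⟩ := hx
  refine ⟨c, (normElement_mul_eq_zero_iff _).2 ?_⟩
  rw [map_sub, map_smul, augmentation_normElement, hc, smul_eq_mul, mul_comm, sub_self]

variable {g : G} (hg : ∀ x, x ∈ Subgroup.zpowers g)
include hg

lemma eq_smul_normElement_of_of_mul_eq_self {x : R[G]} (hx : of R G g * x = x) :
    x = x.coeff g • normElement R G := by
  have hx' : Representation.leftRegular R G g x = x := by
    rw [← Representation.asAlgebraHom_of, Representation.asAlgebraHom_ofMulAction_smul_eq_mul, hx]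
  ext h
  simpa using Representation.coeff_of_leftRegular_of_generator g hg x hx' h

lemma sum_range_card_of_pow_eq_normElement :
    ∑ i ∈ Finset.range (Nat.card G), of R G g ^ i = normElement R G := by
  classical
  have hinj : Set.InjOn (g ^ ·) (Finset.range (Nat.card G)) := by
    rw [← orderOf_eq_card_of_forall_mem_zpowers hg, Finset.coe_range]
    exact pow_injOn_Iio_orderOf
  rw [normElement, ← IsCyclic.image_range_card hg, Finset.sum_image hinj]
  simp only [map_pow]

omit [Fintype G] in
variable [Finite G] in
lemma card_dvd_augmentation_of_of_mul_eq_self {x : R[G]} (hx : of R G g * x = x) :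
    (Nat.card G : R) ∣ augmentation R G x := by
  have := Fintype.ofFinite G
  rw [eq_smul_normElement_of_of_mul_eq_self hg hx, map_smul, augmentation_normElement]
  exact dvd_mul_left _ _

end GroupRing

section GeneratorAction

variable {R G M : Type*} [CommRing R] [Group G] [AddCommGroup M] [Module R M]
  [Module R[G] M] {g : G} {σ : M →ₗ[R] M} (hσ : ∀ m, σ m = of R G g • m)
include hσ

lemma mem_ker_sub_one_iff_of_smul_eq_self (m : M) :
    m ∈ LinearMap.ker (σ - 1) ↔ of R G g • m = m := by
  rw [LinearMap.mem_ker, LinearMap.sub_apply, Module.End.one_apply, sub_eq_zero, hσ]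

lemma pow_apply_eq_of_pow_smul (k : ℕ) (m : M) : (σ ^ k) m = of R G g ^ k • m := by
  induction k with
  | zero => simp
  | succ k ih => rw [pow_succ', Module.End.mul_apply, ih, hσ, pow_succ', mul_smul]

variable [Fintype G] (hg : ∀ x, x ∈ Subgroup.zpowers g)
include hg

lemma mem_ker_sum_pow_iff_normElement_smul_eq_zero (m : M) :
    m ∈ LinearMap.ker (∑ i ∈ Finset.range (Nat.card G), σ ^ i) ↔ normElement R G • m = 0 := by
  simp only [LinearMap.mem_ker, LinearMap.sum_apply, pow_apply_eq_of_pow_smul hσ,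
    ← Finset.sum_smul, sum_range_card_of_pow_eq_normElement hg]

omit [Fintype G] in
variable [Finite G] in
lemma smul_mem_ker_sub_one_sup_ker_sum_pow {x : R[G]}
    (hx : (Nat.card G : R) ∣ augmentation R G x) (m : M) :
    x • m ∈ LinearMap.ker (σ - 1) ⊔
      LinearMap.ker (∑ i ∈ Finset.range (Nat.card G), σ ^ i) := by
  have := Fintype.ofFinite G
  obtain ⟨c, hc⟩ := exists_normElement_mul_sub_smul_normElement_eq_zero hx
  rw [← add_sub_cancel (c • normElement R G) x, add_smul]
  refine Submodule.add_mem_sup ?_ ?_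
  · rw [mem_ker_sub_one_iff_of_smul_eq_self hσ, smul_smul, mul_smul_comm, of_mul_normElement]
  · rw [mem_ker_sum_pow_iff_normElement_smul_eq_zero hσ hg, smul_smul, hc, zero_smul]

end GeneratorAction

section FreeModule

variable {R G M ι : Type*} [CommRing R] [Group G] [AddCommGroup M] [Module R M]
  [Module R[G] M] [IsScalarTower R R[G] M]

/-- The map sending a vector of a free `R[G]`-module to the augmentations of its coordinates,
reduced modulo the order of `G`. -/
noncomputable def coordAugmentationModCard (b : Module.Basis ι R[G] M) :
    M →ₗ[R] ι →₀ R ⧸ Ideal.span {(Nat.card G : R)} :=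
  Finsupp.mapRange.linearMap (augmentationModCard R G) ∘ₗ b.repr.toLinearMap.restrictScalars R

lemma coordAugmentationModCard_surjective (b : Module.Basis ι R[G] M) :
    Function.Surjective (coordAugmentationModCard b) :=
  (Finsupp.mapRange_surjective _ (map_zero _) augmentationModCard_surjective).comp
    b.repr.surjective

lemma mem_ker_coordAugmentationModCard_iff (b : Module.Basis ι R[G] M) (m : M) :
    m ∈ LinearMap.ker (coordAugmentationModCard b) ↔
      ∀ i, (Nat.card G : R) ∣ augmentation R G (b.repr m i) := by
  simp [coordAugmentationModCard, Finsupp.ext_iff, augmentationModCard_eq_zero_iff]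

variable [Finite G] {g : G} {σ : M →ₗ[R] M} (hσ : ∀ m, σ m = of R G g • m)
  (hg : ∀ x, x ∈ Subgroup.zpowers g)
include hσ hg

lemma ker_sub_one_sup_ker_sum_pow_le (b : Module.Basis ι R[G] M) :
    LinearMap.ker (σ - 1) ⊔ LinearMap.ker (∑ i ∈ Finset.range (Nat.card G), σ ^ i) ≤
      LinearMap.ker (coordAugmentationModCard b) := by
  have := Fintype.ofFinite G
  refine sup_le (fun m hm => ?_) (fun m hm => ?_) <;>
    refine (mem_ker_coordAugmentationModCard_iff b m).2 fun i => ?_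
  · rw [mem_ker_sub_one_iff_of_smul_eq_self hσ] at hm
    refine card_dvd_augmentation_of_of_mul_eq_self hg ?_
    simpa using congrArg (fun m => b.repr m i) hm
  · rw [mem_ker_sum_pow_iff_normElement_smul_eq_zero hσ hg] at hm
    have hmi : normElement R G * b.repr m i = 0 := by
      simpa using congrArg (fun m => b.repr m i) hm
    rw [(normElement_mul_eq_zero_iff _).1 hmi]
    exact dvd_zero _

lemma ker_sub_one_sup_ker_sum_pow (b : Module.Basis ι R[G] M) :
    LinearMap.ker (σ - 1) ⊔ LinearMap.ker (∑ i ∈ Finset.range (Nat.card G), σ ^ i) =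
      LinearMap.ker (coordAugmentationModCard b) := by
  refine le_antisymm (ker_sub_one_sup_ker_sum_pow_le hσ hg b) fun m hm => ?_
  rw [mem_ker_coordAugmentationModCard_iff] at hm
  rw [← b.linearCombination_repr m, Finsupp.linearCombination_apply]
  exact Submodule.sum_mem _ fun i _ => smul_mem_ker_sub_one_sup_ker_sum_pow hσ hg (hm i) (b i)

end FreeModule

theorem stmt_1_general {R G M ι : Type*} [CommRing R] [Group G] [Finite G] [AddCommGroup M]
    [Module R M] [Module R[G] M] [IsScalarTower R R[G] M]
    (b : Module.Basis ι R[G] M) {g : G} (hg : ∀ x, x ∈ Subgroup.zpowers g)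
    (σ : M →ₗ[R] M) (hσ : ∀ m, σ m = of R G g • m) :
    Nonempty ((M ⧸ (LinearMap.ker (σ - 1) ⊔
      LinearMap.ker (∑ i ∈ Finset.range (Nat.card G), σ ^ i))) ≃ₗ[R]
        (ι →₀ R ⧸ Ideal.span {(Nat.card G : R)})) := by
  rw [ker_sub_one_sup_ker_sum_pow hσ hg b]
  exact ⟨(coordAugmentationModCard b).quotKerEquivOfSurjective
    (coordAugmentationModCard_surjective b)⟩

lemma mem_zpowers_ofAdd_one (n : ℕ) (x : Multiplicative (ZMod n)) :
    x ∈ Subgroup.zpowers (Multiplicative.ofAdd (1 : ZMod n)) := by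
  obtain ⟨k, hk⟩ := ZMod.intCast_surjective x.toAdd
  exact ⟨k, by simp [← ofAdd_zsmul, hk]⟩

lemma card_finsupp_int_quotient_span (ι : Type*) [Finite ι] (n : ℕ) :
    Nat.card (ι →₀ ℤ ⧸ Ideal.span {(n : ℤ)}) = n ^ Nat.card ι := by
  rw [Nat.card_congr Finsupp.equivFunOnFinite, Nat.card_fun,
    Nat.card_congr (Int.quotientSpanNatEquivZMod n).toEquiv, Nat.card_zmod]

/-- Let p be a prime and M a free module of finite rank r over the integral
group ring ℤ[ℤ/pℤ], with σ the action of a fixed generator of ℤ/pℤ.  Then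
M/(ker(σ−1) + ker(P(σ))) is a finite group of cardinality p^r, where
P(σ) = 1 + σ + ⋯ + σ^{p−1}. -/
theorem stmt_1 (p : ℕ) (hp : p.Prime) (M : Type*) [AddCommGroup M]
    [Module (MonoidAlgebra ℤ (Multiplicative (ZMod p))) M]
    (r : ℕ) (b : Module.Basis (Fin r) (MonoidAlgebra ℤ (Multiplicative (ZMod p))) M)
    (σ : M →ₗ[ℤ] M)
    (hσ : ∀ m : M, σ m =
      (MonoidAlgebra.of ℤ (Multiplicative (ZMod p)) (Multiplicative.ofAdd (1 : ZMod p))) • m) :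
    Nat.card (M ⧸ (LinearMap.ker (σ - 1) ⊔
      LinearMap.ker (∑ i ∈ Finset.range p, σ ^ i))) = p ^ r := by
  have : NeZero p := ⟨hp.ne_zero⟩
  have hcard : Nat.card (Multiplicative (ZMod p)) = p := by simp
  obtain ⟨e⟩ := hcard ▸ stmt_1_general b (mem_zpowers_ofAdd_one p) σ hσ
  rw [Nat.card_congr e.toEquiv, card_finsupp_int_quotient_span, Nat.card_fin]
end

section
/- Let p be a prime and let C and E be bounded cochain complexes of torsion-free abelian groups, each equipped with a chain automorphism σ satisfying σ^p = id, and let f : C → E, g : E → C be σ-commuting chain maps that are mutually inverse up to σ-commuting chain homotopies. Write C' for the quotient complex C/(C^{σ−1} ⊕ C^{P(σ)}) and E' = E/(E^{σ−1} ⊕ E^{P(σ)}). Then the map C' → E' induced by f induces isomorphisms H^i(C') ≅ H^i(E') for every i. -/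
open CategoryTheory CategoryTheory.Limits

/-!
An additive functor preserves homotopy equivalences. Here the functor sends an object `X` with two
endomorphisms `a`, `b` to `X / (ker a + ker b)`: a morphism that commutes with `a` and `b` maps
kernels to kernels, so it descends to the quotients. Kernels and cokernels of complexes are computed
degreewise, so this applies both to the chain maps and to the components of the homotopies.
Whatever commutes with `σ` commutes with every element of `ℤ[σ]`, in particular with `σ - 1` and
`P(σ)`.
-/

section KernelSumQuotient

variable {A B : Type*} [Category* A] [Category* B] [Preadditive A] [Preadditive B]

/-- For additive functors `F`, `G` and a morphism `k : F X ⟶ G Y`, the ring of pairs of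
endomorphisms of `X` and `Y` that `k` intertwines. The two functors allow for `k` that is not a
morphism between `X` and `Y` themselves, such as a component of a homotopy, where `F` and `G` are
evaluations in different degrees. -/
def intertwinedEnds (F G : A ⥤ B) [F.Additive] [G.Additive] {X Y : A} (k : F.obj X ⟶ G.obj Y) :
    Subring (End X × End Y) where
  carrier := {s | F.map s.1 ≫ k = k ≫ G.map s.2}
  zero_mem' := by
    change F.map (0 : X ⟶ X) ≫ k = k ≫ G.map (0 : Y ⟶ Y)
    simp
  one_mem' := by
    change F.map (𝟙 X) ≫ k = k ≫ G.map (𝟙 Y)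
    simp
  add_mem' {s t} hs ht := by
    change F.map ((s.1 : X ⟶ X) + t.1) ≫ k = k ≫ G.map ((s.2 : Y ⟶ Y) + t.2)
    rw [F.map_add, G.map_add, Preadditive.add_comp, Preadditive.comp_add, hs, ht]
  neg_mem' {s} hs := by
    change F.map (-(s.1 : X ⟶ X)) ≫ k = k ≫ G.map (-(s.2 : Y ⟶ Y))
    rw [F.map_neg, G.map_neg, Preadditive.neg_comp, Preadditive.comp_neg, hs]
  mul_mem' {s t} hs ht := by
    change F.map ((t.1 : X ⟶ X) ≫ s.1) ≫ k = k ≫ G.map ((t.2 : Y ⟶ Y) ≫ s.2)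
    rw [F.map_comp, G.map_comp, Category.assoc, hs, reassoc_of% ht]

lemma mem_intertwinedEnds {F G : A ⥤ B} [F.Additive] [G.Additive] {X Y : A}
    {k : F.obj X ⟶ G.obj Y} {a : End X} {b : End Y} :
    (a, b) ∈ intertwinedEnds F G k ↔ F.map a ≫ k = k ≫ G.map b :=
  Iff.rfl

variable [HasKernels A]

lemma map_kernel_ι_comp_eq_zero (F G : A ⥤ B) [F.Additive] [G.Additive]
    [PreservesLimitsOfShape WalkingParallelPair G] {X Y Z : A} {a : End X} {a' : End Y}
    {k : F.obj X ⟶ G.obj Y} (hk : (a, a') ∈ intertwinedEnds F G k) {q : Y ⟶ Z}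
    (hq : kernel.ι a' ≫ q = 0) : F.map (kernel.ι a) ≫ k ≫ G.map q = 0 := by
  have image_mem_kernel : (F.map (kernel.ι a) ≫ k) ≫ G.map a' = 0 := by
    rw [Category.assoc, ← mem_intertwinedEnds.mp hk, ← F.map_comp_assoc,
      kernel.condition, F.map_zero, zero_comp]
  obtain ⟨l, hl⟩ := KernelFork.IsLimit.lift'
    (isLimitForkMapOfIsLimit' G (kernel.condition a') (kernelIsKernel a')) _ image_mem_kernel
  replace hl : l ≫ G.map (kernel.ι a') = F.map (kernel.ι a) ≫ k := hl
  rw [← Category.assoc, ← hl, Category.assoc, ← G.map_comp, hq, G.map_zero, comp_zero]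

variable [HasCokernels A] [HasBinaryBiproducts A]

/-- The quotient `X / (ker a + ker b)`, as the cokernel of `ker a ⊞ ker b ⟶ X`. -/
noncomputable abbrev kernelSumQuotient {X : A} (a b : End X) : A :=
  cokernel (biprod.desc (kernel.ι a) (kernel.ι b))

/-- The projection of `X` onto `X / (ker a + ker b)`. -/
noncomputable abbrev kernelSumQuotientπ {X : A} (a b : End X) : X ⟶ kernelSumQuotient a b :=
  cokernel.π (biprod.desc (kernel.ι a) (kernel.ι b))

lemma kernel_ι_left_comp_kernelSumQuotientπ {X : A} (a b : End X) :
    kernel.ι a ≫ kernelSumQuotientπ a b = 0 := by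
  rw [← biprod.inl_desc (kernel.ι a) (kernel.ι b), Category.assoc, cokernel.condition, comp_zero]

lemma kernel_ι_right_comp_kernelSumQuotientπ {X : A} (a b : End X) :
    kernel.ι b ≫ kernelSumQuotientπ a b = 0 := by
  rw [← biprod.inr_desc (kernel.ι a) (kernel.ι b), Category.assoc, cokernel.condition, comp_zero]

lemma exists_desc_kernelSumQuotient (F : A ⥤ B) [F.Additive]
    [PreservesColimitsOfShape WalkingParallelPair F] {X : A} (a b : End X) {W : B}
    (m : F.obj X ⟶ W) (ha : F.map (kernel.ι a) ≫ m = 0) (hb : F.map (kernel.ι b) ≫ m = 0) :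
    ∃ m' : F.obj (kernelSumQuotient a b) ⟶ W, F.map (kernelSumQuotientπ a b) ≫ m' = m := by
  have sum_comp : F.map (biprod.desc (kernel.ι a) (kernel.ι b)) ≫ m = 0 := by
    rw [biprod.desc_eq, F.map_add, F.map_comp, F.map_comp, Preadditive.add_comp, Category.assoc,
      Category.assoc, ha, hb, comp_zero, comp_zero, add_zero]
  obtain ⟨m', hm'⟩ := CokernelCofork.IsColimit.desc'
    (isColimitCoforkMapOfIsColimit' F (cokernel.condition _) (cokernelIsCokernel _)) m sum_comp
  exact ⟨m', hm'⟩

theorem exists_map_kernelSumQuotient (F G : A ⥤ B) [F.Additive] [G.Additive]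
    [PreservesColimitsOfShape WalkingParallelPair F]
    [PreservesLimitsOfShape WalkingParallelPair G] {X Y : A} {a b : End X} {a' b' : End Y}
    {k : F.obj X ⟶ G.obj Y} (ha : (a, a') ∈ intertwinedEnds F G k)
    (hb : (b, b') ∈ intertwinedEnds F G k) :
    ∃ k' : F.obj (kernelSumQuotient a b) ⟶ G.obj (kernelSumQuotient a' b'),
      F.map (kernelSumQuotientπ a b) ≫ k' = k ≫ G.map (kernelSumQuotientπ a' b') :=
  exists_desc_kernelSumQuotient F a b _
    (map_kernel_ι_comp_eq_zero F G ha (kernel_ι_left_comp_kernelSumQuotientπ a' b'))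
    (map_kernel_ι_comp_eq_zero F G hb (kernel_ι_right_comp_kernelSumQuotientπ a' b'))

end KernelSumQuotient

section Homotopy

variable {V ι : Type*} [Category* V] {c : ComplexShape ι}

lemma nonempty_homotopy_of_epi [Preadditive V] {C D Q R : HomologicalComplex V c} (π : C ⟶ Q)
    [∀ i, Epi (π.f i)] (ρ : D ⟶ R) {u v : C ⟶ D} {u' v' : Q ⟶ R} (hu : π ≫ u' = u ≫ ρ)
    (hv : π ≫ v' = v ≫ ρ) (h : Homotopy u v)
    (hdesc : ∀ i j, ∃ k : Q.X i ⟶ R.X j, π.f i ≫ k = h.hom i j ≫ ρ.f j) :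
    Nonempty (Homotopy u' v') := by
  choose k hk using hdesc
  refine ⟨k, fun i j hij => ?_, fun i => ?_⟩
  · rw [← cancel_epi (π.f i), hk, h.zero i j hij, zero_comp, comp_zero]
  · rw [← cancel_epi (π.f i)]
    calc π.f i ≫ u'.f i
        = u.f i ≫ ρ.f i := HomologicalComplex.congr_hom hu i
      _ = dNext i h.hom ≫ ρ.f i + prevD i h.hom ≫ ρ.f i + v.f i ≫ ρ.f i := by
          rw [h.comm, Preadditive.add_comp, Preadditive.add_comp]
      _ = π.f i ≫ dNext i k + π.f i ≫ prevD i k + π.f i ≫ v'.f i := by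
          rw [← dNext_comp_right, ← prevD_comp_right, ← dNext_comp_left, ← prevD_comp_left,
            ← HomologicalComplex.comp_f v, ← hv, HomologicalComplex.comp_f]
          simp only [hk]
      _ = π.f i ≫ (dNext i k + prevD i k + v'.f i) := by
          rw [Preadditive.comp_add, Preadditive.comp_add]

open HomologicalComplex (eval)

/-- The ring of pairs of chain endomorphisms that are intertwined by every component of the
homotopy `h`. -/
def homotopyIntertwinedEnds [Preadditive V] {C D : HomologicalComplex V c} {u v : C ⟶ D}
    (h : Homotopy u v) : Subring (End C × End D) :=
  ⨅ (i) (j), intertwinedEnds (eval V c i) (eval V c j) (h.hom i j)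

lemma mem_homotopyIntertwinedEnds [Preadditive V] {C D : HomologicalComplex V c} {u v : C ⟶ D}
    {h : Homotopy u v} {a : End C} {b : End D} :
    (a, b) ∈ homotopyIntertwinedEnds h ↔
      ∀ i j, (a, b) ∈ intertwinedEnds (eval V c i) (eval V c j) (h.hom i j) := by
  simp only [homotopyIntertwinedEnds, Subring.mem_iInf]

/-- The ring of pairs of chain endomorphisms with respect to which the homotopy equivalence `e` is
equivariant: they commute with both chain maps and with both homotopies of `e`. -/
def equivariantEnds [Preadditive V] {C E : HomologicalComplex V c} (e : HomotopyEquiv C E) :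
    Subring (End C × End E) :=
  intertwinedEnds (𝟭 _) (𝟭 _) e.hom ⊓
  (intertwinedEnds (𝟭 _) (𝟭 _) e.inv).comap ((RingHom.snd _ _).prod (RingHom.fst _ _)) ⊓
  (homotopyIntertwinedEnds e.homotopyHomInvId).comap ((RingHom.fst _ _).prod (RingHom.fst _ _)) ⊓
  (homotopyIntertwinedEnds e.homotopyInvHomId).comap ((RingHom.snd _ _).prod (RingHom.snd _ _))

lemma mem_equivariantEnds [Preadditive V] {C E : HomologicalComplex V c} {e : HomotopyEquiv C E}
    {a : End C} {b : End E} :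
    (a, b) ∈ equivariantEnds e ↔
      (a, b) ∈ intertwinedEnds (𝟭 _) (𝟭 _) e.hom ∧ (b, a) ∈ intertwinedEnds (𝟭 _) (𝟭 _) e.inv ∧
        (a, a) ∈ homotopyIntertwinedEnds e.homotopyHomInvId ∧
        (b, b) ∈ homotopyIntertwinedEnds e.homotopyInvHomId := by
  simp only [equivariantEnds, Subring.mem_inf, Subring.mem_comap, and_assoc]
  rfl

variable [Abelian V] {C E : HomologicalComplex V c}

lemma nonempty_homotopy_kernelSumQuotient {a b : End C} {u : C ⟶ C} (h : Homotopy u (𝟙 C))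
    (ha : (a, a) ∈ homotopyIntertwinedEnds h) (hb : (b, b) ∈ homotopyIntertwinedEnds h)
    {φ : kernelSumQuotient a b ⟶ kernelSumQuotient a b}
    (hφ : kernelSumQuotientπ a b ≫ φ = u ≫ kernelSumQuotientπ a b) :
    Nonempty (Homotopy φ (𝟙 _)) := by
  rw [mem_homotopyIntertwinedEnds] at ha hb
  exact nonempty_homotopy_of_epi _ _ hφ (by rw [Category.comp_id, Category.id_comp]) h
    fun i j => exists_map_kernelSumQuotient (eval V c i) (eval V c j) (ha i j) (hb i j)

theorem exists_homotopyEquiv_kernelSumQuotient (e : HomotopyEquiv C E) {a b : End C}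
    {a' b' : End E} (ha : (a, a') ∈ equivariantEnds e) (hb : (b, b') ∈ equivariantEnds e) :
    ∃ e' : HomotopyEquiv (kernelSumQuotient a b) (kernelSumQuotient a' b'),
      kernelSumQuotientπ a b ≫ e'.hom = e.hom ≫ kernelSumQuotientπ a' b' := by
  obtain ⟨ha_hom, ha_inv, ha_homInv, ha_invHom⟩ := mem_equivariantEnds.mp ha
  obtain ⟨hb_hom, hb_inv, hb_homInv, hb_invHom⟩ := mem_equivariantEnds.mp hb
  obtain ⟨φ, hφ⟩ : ∃ φ : kernelSumQuotient a b ⟶ kernelSumQuotient a' b',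
      kernelSumQuotientπ a b ≫ φ = e.hom ≫ kernelSumQuotientπ a' b' :=
    exists_map_kernelSumQuotient (𝟭 _) (𝟭 _) ha_hom hb_hom
  obtain ⟨ψ, hψ⟩ : ∃ ψ : kernelSumQuotient a' b' ⟶ kernelSumQuotient a b,
      kernelSumQuotientπ a' b' ≫ ψ = e.inv ≫ kernelSumQuotientπ a b :=
    exists_map_kernelSumQuotient (𝟭 _) (𝟭 _) ha_inv hb_inv
  obtain ⟨homInv⟩ := nonempty_homotopy_kernelSumQuotient e.homotopyHomInvId ha_homInv hb_homInv
    (φ := φ ≫ ψ) (by rw [reassoc_of% hφ, hψ, Category.assoc])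
  obtain ⟨invHom⟩ := nonempty_homotopy_kernelSumQuotient e.homotopyInvHomId ha_invHom hb_invHom
    (φ := ψ ≫ φ) (by rw [reassoc_of% hψ, hφ, Category.assoc])
  exact ⟨⟨φ, ψ, homInv, invHom⟩, hφ⟩

theorem stmt_5_general (n : ℕ) (σC : End C) (σE : End E) (f : C ⟶ E) (g : E ⟶ C)
    (hfσ : f ≫ σE = σC ≫ f) (hgσ : g ≫ σC = σE ≫ g)
    (hgf : ∃ h : Homotopy (f ≫ g) (𝟙 C),
      ∀ i j, (σC : C ⟶ C).f i ≫ h.hom i j = h.hom i j ≫ (σC : C ⟶ C).f j)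
    (hfg : ∃ h : Homotopy (g ≫ f) (𝟙 E),
      ∀ i j, (σE : E ⟶ E).f i ≫ h.hom i j = h.hom i j ≫ (σE : E ⟶ E).f j) :
    ∃ e : HomotopyEquiv
        (kernelSumQuotient (σC - 1) (∑ k ∈ Finset.range n, σC ^ k))
        (kernelSumQuotient (σE - 1) (∑ k ∈ Finset.range n, σE ^ k)),
      kernelSumQuotientπ (σC - 1) (∑ k ∈ Finset.range n, σC ^ k) ≫ e.hom =
        f ≫ kernelSumQuotientπ (σE - 1) (∑ k ∈ Finset.range n, σE ^ k) := by
  obtain ⟨homInv, h_homInv⟩ := hgf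
  obtain ⟨invHom, h_invHom⟩ := hfg
  let e : HomotopyEquiv C E := ⟨f, g, homInv, invHom⟩
  have hσ : (σC, σE) ∈ equivariantEnds e :=
    mem_equivariantEnds.mpr ⟨hfσ.symm, hgσ.symm, mem_homotopyIntertwinedEnds.mpr h_homInv,
      mem_homotopyIntertwinedEnds.mpr h_invHom⟩
  have hsum : (∑ k ∈ Finset.range n, σC ^ k, ∑ k ∈ Finset.range n, σE ^ k) ∈
      equivariantEnds e := by
    rw [prod_mk_sum]
    exact sum_mem fun k _ => pow_mem hσ k
  exact exists_homotopyEquiv_kernelSumQuotient e (sub_mem hσ (one_mem _)) hsum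

end Homotopy

/-- Let p be a prime and C, E bounded cochain complexes of torsion-free abelian
groups with chain automorphisms σ satisfying σ^p = id, and f : C → E, g : E → C σ-commuting
chain maps, mutually inverse up to σ-commuting chain homotopies.  Write
C' = C/(C^{σ−1} ⊕ C^{P(σ)}) and E' = E/(E^{σ−1} ⊕ E^{P(σ)}).  Then the map C' → E' induced
by f induces isomorphisms H^i(C') ≅ H^i(E') for every i. -/
theorem stmt_5 (p : ℕ) (hp : p.Prime)
    (C E : CochainComplex (ModuleCat ℤ) ℤ)
    (hCbd : ∃ N : ℕ, ∀ i : ℤ, (N : ℤ) ≤ |i| → IsZero (C.X i))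
    (hEbd : ∃ N : ℕ, ∀ i : ℤ, (N : ℤ) ≤ |i| → IsZero (E.X i))
    (hCtf : ∀ i : ℤ, NoZeroSMulDivisors ℤ (C.X i))
    (hEtf : ∀ i : ℤ, NoZeroSMulDivisors ℤ (E.X i))
    (σC : End C) (σE : End E) (hσC : σC ^ p = 1) (hσE : σE ^ p = 1)
    (f : C ⟶ E) (g : E ⟶ C)
    (hfσ : f ≫ σE = σC ≫ f) (hgσ : g ≫ σC = σE ≫ g)
    (hgf : ∃ h : Homotopy (f ≫ g) (𝟙 C),
      ∀ i j : ℤ, (σC : C ⟶ C).f i ≫ h.hom i j = h.hom i j ≫ (σC : C ⟶ C).f j)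
    (hfg : ∃ h : Homotopy (g ≫ f) (𝟙 E),
      ∀ i j : ℤ, (σE : E ⟶ E).f i ≫ h.hom i j = h.hom i j ≫ (σE : E ⟶ E).f j) :
    ∃ φ : cokernel (biprod.desc (kernel.ι (σC - 1))
            (kernel.ι (∑ k ∈ Finset.range p, σC ^ k))) ⟶
          cokernel (biprod.desc (kernel.ι (σE - 1))
            (kernel.ι (∑ k ∈ Finset.range p, σE ^ k))),
      cokernel.π (biprod.desc (kernel.ι (σC - 1))
          (kernel.ι (∑ k ∈ Finset.range p, σC ^ k))) ≫ φ =
        f ≫ cokernel.π (biprod.desc (kernel.ι (σE - 1))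
          (kernel.ι (∑ k ∈ Finset.range p, σE ^ k))) ∧
      ∀ i : ℤ, IsIso
        ((HomologicalComplex.homologyFunctor (ModuleCat ℤ) (ComplexShape.up ℤ) i).map φ) := by
  obtain ⟨e, he⟩ := stmt_5_general p σC σE f g hfσ hgσ hgf hfg
  exact ⟨e.hom, he, fun i => (e.toHomologyIso i).isIso_hom⟩
end

section
/- Let A be a finitely generated free abelian group with an automorphism σ satisfying σ² = id, and let σ̄ denote the induced automorphism of A ⊗ 𝔽₂. Then there is an isomorphism of abelian groups A/(ker(σ−1) ⊕ ker(σ+1)) ≅ (A ⊗ 𝔽₂)/( ker(σ̄ − 1) + im(σ̄ − 1) ); equivalently, A/(ker(σ−1) ⊕ ker(σ+1)) is isomorphic to the σ̄-coinvariants of (A ⊗ 𝔽₂)/ker(σ̄ − 1). -/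
open TensorProduct

/-!
Write `σ̄` for the reduction of `σ` modulo 2. If `σ x - x = 2 w`, then `2 (σ w + w) = 0`, so
`σ w = -w` and `x = (x + w) - w` splits into a fixed and an anti-fixed vector. Hence
`ker (σ - 1) + ker (σ + 1) = {x | σ x - x ∈ 2 A}`, which is the preimage of `ker (σ̄ - 1)` under
the surjection `A → A ⊗ 𝔽₂`. Finally `(σ̄ - 1) ^ 2 = 2 (1 - σ̄) = 0` shows that `im (σ̄ - 1)` is
already contained in `ker (σ̄ - 1)`.
-/

section Involution

variable {R M : Type*} [CommRing R] [AddCommGroup M] [Module R M] {σ : Module.End R M}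

lemma range_sub_one_le_ker_sub_one_of_two_eq_zero (h2 : (2 : R) = 0) (hσ : σ ^ 2 = 1) :
    LinearMap.range (σ - 1) ≤ LinearMap.ker (σ - 1) := by
  rw [LinearMap.range_le_ker_iff, ← Module.End.mul_eq_comp]
  calc (σ - 1) * (σ - 1) = σ ^ 2 - 1 + (2 : R) • (1 - σ) := by rw [two_smul]; noncomm_ring
    _ = 0 := by rw [hσ, h2, sub_self, zero_smul, add_zero]

lemma apply_eq_neg_of_apply_sub_self_eq_two_smul (h2 : IsSMulRegular M (2 : R)) (hσ : σ ^ 2 = 1)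
    {x w : M} (hw : σ x - x = (2 : R) • w) : σ w = -w := by
  have hσσx : σ (σ x) = x := by simpa [sq] using LinearMap.congr_fun hσ x
  refine h2 ?_
  calc (2 : R) • σ w = σ (σ x - x) := by rw [hw, map_smul]
    _ = -(σ x - x) := by rw [map_sub, hσσx, neg_sub]
    _ = (2 : R) • -w := by rw [hw, smul_neg]

open scoped Pointwise in
lemma ker_sub_one_sup_ker_add_one (h2 : IsSMulRegular M (2 : R)) (hσ : σ ^ 2 = 1) :
    LinearMap.ker (σ - 1) ⊔ LinearMap.ker (σ + 1) =
      ((2 : R) • (⊤ : Submodule R M)).comap (σ - 1) := by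
  refine le_antisymm (sup_le (LinearMap.ker_le_comap _) fun x hx => ?_) fun x hx => ?_
  · have hσx : σ x = -x := eq_neg_of_add_eq_zero_left hx
    refine (Submodule.mem_smul_pointwise_iff_exists _ _ _).2 ⟨-x, Submodule.mem_top, ?_⟩
    rw [LinearMap.sub_apply, Module.End.one_apply, hσx, two_smul, sub_eq_add_neg]
  · obtain ⟨w, -, hw⟩ := (Submodule.mem_smul_pointwise_iff_exists _ _ _).1 hx
    replace hw : σ x - x = (2 : R) • w := hw.symm
    have hσw : σ w = -w := apply_eq_neg_of_apply_sub_self_eq_two_smul h2 hσ hw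
    have fixed : x + w ∈ LinearMap.ker (σ - 1) := by
      rw [LinearMap.mem_ker, LinearMap.sub_apply, Module.End.one_apply, map_add, hσw,
        sub_eq_iff_eq_add.1 hw]
      module
    have antifixed : w ∈ LinearMap.ker (σ + 1) := by
      rw [LinearMap.mem_ker, LinearMap.add_apply, Module.End.one_apply, hσw, neg_add_cancel]
    exact Submodule.mem_sup.2 ⟨x + w, fixed, -w, neg_mem antifixed, add_neg_cancel_right x w⟩

end Involution

section BaseChange

variable {R S M N : Type*} [CommRing R] [CommRing S] [Algebra R S]
  [AddCommGroup M] [Module R M] [AddCommGroup N] [Module R N]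

lemma ker_tensorProductMk_of_surjective (hS : Function.Surjective (algebraMap R S)) :
    LinearMap.ker (TensorProduct.mk R S M 1) =
      RingHom.ker (algebraMap R S) • (⊤ : Submodule R M) := by
  let e : (R ⧸ RingHom.ker (algebraMap R S)) ≃ₐ[R] S :=
    Ideal.quotientKerAlgEquivOfSurjective (f := Algebra.ofId R S) hS
  have mk_eq_comp : TensorProduct.mk R S M 1 =
      (e.toLinearEquiv.rTensor M).toLinearMap ∘ₗ
        TensorProduct.mk R (R ⧸ RingHom.ker (algebraMap R S)) M 1 := by
    ext m
    simp
  rw [mk_eq_comp, LinearEquiv.ker_comp, LinearMap.ker_tensorProductMk]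

lemma comap_tensorProductMk_ker_baseChange (f : M →ₗ[R] N) :
    ((LinearMap.ker (f.baseChange S)).restrictScalars R).comap (TensorProduct.mk R S M 1) =
      (LinearMap.ker (TensorProduct.mk R S N 1)).comap f := by
  ext m
  simp

end BaseChange

theorem stmt_9_general {R S M : Type*} [CommRing R] [CommRing S] [Algebra R S]
    [AddCommGroup M] [Module R M] (hS : Function.Surjective (algebraMap R S))
    (hker : RingHom.ker (algebraMap R S) = Ideal.span {2}) (h2 : IsSMulRegular M (2 : R))
    {σ : Module.End R M} (hσ : σ ^ 2 = 1) :
    Nonempty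
      ((M ⧸ (LinearMap.ker (σ - 1) ⊔ LinearMap.ker (σ + 1))) ≃ₗ[R]
        ((S ⊗[R] M) ⧸
          (LinearMap.ker (σ.baseChange S - 1) ⊔ LinearMap.range (σ.baseChange S - 1)))) := by
  have two_eq_zero : (2 : S) = 0 := by
    have two_mem : (2 : R) ∈ RingHom.ker (algebraMap R S) := hker ▸ Ideal.mem_span_singleton_self 2
    rwa [RingHom.mem_ker, map_ofNat] at two_mem
  have baseChange_sq : σ.baseChange S ^ 2 = 1 := by
    rw [← LinearMap.baseChange_pow, hσ, LinearMap.baseChange_one]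
  rw [sup_eq_left.2 (range_sub_one_le_ker_sub_one_of_two_eq_zero two_eq_zero baseChange_sq)]
  let reduction : M →ₗ[R] (S ⊗[R] M) ⧸ LinearMap.ker (σ.baseChange S - 1) :=
    (Submodule.mkQ _).restrictScalars R ∘ₗ TensorProduct.mk R S M 1
  have reduction_surjective : Function.Surjective reduction :=
    (Submodule.mkQ_surjective _).comp (TensorProduct.mk_surjective R M S hS)
  have ker_reduction :
      LinearMap.ker reduction = LinearMap.ker (σ - 1) ⊔ LinearMap.ker (σ + 1) := by
    rw [LinearMap.ker_comp, LinearMap.ker_restrictScalars, Submodule.ker_mkQ,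
      ← LinearMap.baseChange_one, ← LinearMap.baseChange_sub,
      comap_tensorProductMk_ker_baseChange, ker_tensorProductMk_of_surjective hS, hker,
      Submodule.ideal_span_singleton_smul, ker_sub_one_sup_ker_add_one h2 hσ]
  exact ⟨(Submodule.quotEquivOfEq _ _ ker_reduction.symm).trans
    (reduction.quotKerEquivOfSurjective reduction_surjective)⟩

/-- Let A be a finitely generated free abelian group with an automorphism σ
satisfying σ² = id, and let σ̄ be the induced automorphism of A ⊗ 𝔽₂.  Then
A/(ker(σ−1) ⊕ ker(σ+1)) ≅ (A ⊗ 𝔽₂)/(ker(σ̄−1) + im(σ̄−1)) as abelian groups, i.e.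
A/(ker(σ−1) ⊕ ker(σ+1)) is isomorphic to the σ̄-coinvariants of (A ⊗ 𝔽₂)/ker(σ̄−1). -/
theorem stmt_9 (A : Type*) [AddCommGroup A] [Module.Free ℤ A] [Module.Finite ℤ A]
    (σ : A ≃ₗ[ℤ] A) (hσ : σ.toLinearMap ^ 2 = 1) :
    Nonempty
      ((A ⧸ (LinearMap.ker (σ.toLinearMap - 1) ⊔ LinearMap.ker (σ.toLinearMap + 1))) ≃+
        ((ZMod 2 ⊗[ℤ] A) ⧸
          (LinearMap.ker (σ.toLinearMap.baseChange (ZMod 2) - 1) ⊔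
            LinearMap.range (σ.toLinearMap.baseChange (ZMod 2) - 1)))) :=
  (stmt_9_general ZMod.intCast_surjective (ZMod.ker_intCastRingHom 2)
    (IsSMulRegular.of_ne_zero two_ne_zero) hσ).map LinearEquiv.toAddEquiv
end
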